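/- For every nonnegative integer m, one has (Θ₋ + Θ₊)^m = Σ_{k=0}^{⌊m/2⌋} c_k(m) (2τ²)^k Σ_{s=0}^{m−2k} C(m−2k, s) Θ₋^s Θ₊^{m−2k−s} in ⋀V ⊗ End(P), where c_k(m) := m! / (2^k k! (m−2k)!) and C(·,·) denotes the binomial coefficient. -/

import Mathlib

open Matrix MvPolynomial TensorProduct

noncomputable section

/-- Index set for entries `x_{i,j}` with `i < j`. -/
abbrev Idx (n : ℕ) := {p : Fin n × Fin n // p.1 < p.2}

/-- Polynomial algebra on the space of alternating `n × n` matrices. -/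
abbrev P (n : ℕ) := MvPolynomial (Idx n) ℂ

/-- Multiplication operator `M_{i,j}` (with `M_{j,i} = -M_{i,j}`, `M_{i,i} = 0`). -/
def Mop (n : ℕ) (i j : Fin n) : Module.End ℂ (P n) :=
  if h : i < j then LinearMap.mulLeft ℂ (X ⟨(i, j), h⟩)
  else if h' : j < i then -LinearMap.mulLeft ℂ (X ⟨(j, i), h'⟩ : P n)
  else 0

/-- Derivation `D_{i,j} = ∂/∂x_{i,j}` (with `D_{j,i} = -D_{i,j}`, `D_{i,i} = 0`). -/
def Dop (n : ℕ) (i j : Fin n) : Module.End ℂ (P n) :=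
  if h : i < j then ((pderiv ⟨(i, j), h⟩ : Derivation ℂ (P n) (P n)) : P n →ₗ[ℂ] P n)
  else if h' : j < i then -((pderiv ⟨(j, i), h'⟩ : Derivation ℂ (P n) (P n)) : P n →ₗ[ℂ] P n)
  else 0

/-- `2n`-dimensional vector space with basis indexed by `Fin n ⊕ Fin n`
(`Sum.inl i ↦ e_{i+1}`, `Sum.inr i ↦ e_{-(i+1)}`). -/
abbrev V (n : ℕ) := (Fin n ⊕ Fin n) → ℂ

/-- The tensor product algebra `⋀V ⊗ End(P)`. -/
abbrev ExtEnd (n : ℕ) := ExteriorAlgebra ℂ (V n) ⊗[ℂ] Module.End ℂ (P n)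

/-- The basis vectors `e_i` in the exterior algebra. -/
def e (n : ℕ) (v : Fin n ⊕ Fin n) : ExteriorAlgebra ℂ (V n) :=
  ExteriorAlgebra.ι ℂ (Pi.single v 1)

/-- `τ = Σ_i e_i e_{−i} ⊗ 1`. -/
def tau (n : ℕ) : ExtEnd n := ∑ i : Fin n, (e n (.inl i) * e n (.inr i)) ⊗ₜ[ℂ] 1

/-- `Θ₋ = Σ_{i,j} e_i e_j ⊗ M_{i,j}`. -/
def ThetaMinus (n : ℕ) : ExtEnd n :=
  ∑ i : Fin n, ∑ j : Fin n, (e n (.inl i) * e n (.inl j)) ⊗ₜ[ℂ] Mop n i j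

/-- `Θ₊ = Σ_{i,j} e_{−j} e_{−i} ⊗ D_{i,j}`. -/
def ThetaPlus (n : ℕ) : ExtEnd n :=
  ∑ i : Fin n, ∑ j : Fin n, (e n (.inr j) * e n (.inr i)) ⊗ₜ[ℂ] Dop n i j

section abstract_part
variable {R : Type*} [Ring R] [Algebra ℂ R]

/-- normally ordered binomial -/
def nob (A B : R) (p : ℕ) : R :=
  ∑ s ∈ Finset.range (p + 1), (p.choose s) • (A ^ s * B ^ (p - s))

lemma nob_succ (A B : R) (p : ℕ) : nob A B (p + 1) = A * nob A B p + nob A B p * B := by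
  have key : nob A B p * B
      = ∑ s ∈ Finset.range (p + 1), (p.choose s) • (A ^ s * B ^ (p + 1 - s)) := by
    unfold nob
    rw [Finset.sum_mul]
    refine Finset.sum_congr rfl fun s hs => ?_
    have : s ≤ p := by simp at hs; omega
    rw [smul_mul_assoc, mul_assoc, ← pow_succ, Nat.sub_add_comm this]
  have key2 : A * nob A B p
      = ∑ s ∈ Finset.range (p + 1), (p.choose s) • (A ^ (s + 1) * B ^ (p + 1 - (s + 1))) := by
    unfold nob
    rw [Finset.mul_sum]
    refine Finset.sum_congr rfl fun s hs => ?_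
    rw [mul_smul_comm, ← mul_assoc, ← pow_succ', Nat.add_sub_add_right]
  have key3 : ∑ s ∈ Finset.range (p + 1), (p.choose s) • (A ^ s * B ^ (p + 1 - s))
      = ∑ s ∈ Finset.range (p + 1), (p.choose (s + 1)) • (A ^ (s + 1) * B ^ (p + 1 - (s + 1)))
        + A ^ 0 * B ^ (p + 1) := by
    have := Finset.sum_range_succ (fun s => (p.choose s) • (A ^ s * B ^ (p + 1 - s))) (p + 1)
    rw [Finset.sum_range_succ'] at this
    simp at this ⊢
    exact this.symm
  rw [key, key2, key3, nob, Finset.sum_range_succ', ← add_assoc, ← Finset.sum_add_distrib]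
  congr 1
  · refine Finset.sum_congr rfl fun s hs => ?_
    rw [Nat.choose_succ_succ, add_smul]
  · simp

lemma B_mul_pow (A B C : R) (h : B * A = A * B + C) (hA : Commute C A) (s : ℕ) :
    B * A ^ s = A ^ s * B + s • (C * A ^ (s - 1)) := by
  induction s with
  | zero => simp
  | succ s ih =>
    rw [pow_succ, ← mul_assoc, ih, add_mul, mul_assoc _ B A, h, mul_add, ← mul_assoc, add_assoc]
    congr 1
    rcases s with _ | s
    · simp
    · simp only [Nat.add_sub_cancel]
      rw [← (hA.pow_right (s + 1)).eq, smul_mul_assoc, mul_assoc, ← pow_succ, succ_nsmul _ (s + 1),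
        add_comm]

lemma B_mul_nob (A B C : R) (h : B * A = A * B + C) (hA : Commute C A) (p : ℕ) :
    B * nob A B p = nob A B p * B + p • (C * nob A B (p - 1)) := by
  rcases p with _ | p
  · simp [nob]
  · have e1 : B * nob A B (p + 1) = nob A B (p + 1) * B + ∑ s ∈ Finset.range (p + 2),
        ((p + 1).choose s * s) • (C * (A ^ (s - 1) * B ^ (p + 1 - s))) := by
      unfold nob
      rw [Finset.mul_sum, Finset.sum_mul, ← Finset.sum_add_distrib]
      refine Finset.sum_congr rfl fun s hs => ?_
      rw [mul_smul_comm, ← mul_assoc, B_mul_pow A B C h hA, add_mul, smul_add, smul_mul_assoc,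
        smul_mul_assoc, smul_smul, mul_assoc, mul_assoc, mul_assoc, ← pow_succ,
        ← pow_succ']
    rw [e1, Finset.sum_range_succ']
    simp only [mul_zero, zero_smul, add_zero, Nat.add_sub_cancel]
    congr 1
    unfold nob
    rw [Finset.mul_sum, Finset.smul_sum]
    refine Finset.sum_congr rfl fun s hs => ?_
    rw [mul_smul_comm, smul_smul, Nat.add_sub_add_right, ← Nat.add_one_mul_choose_eq]

/-- coefficient, extended by zero -/
def cco (m k : ℕ) : ℂ := if 2 * k ≤ m then
  (m.factorial : ℂ) / ((2 : ℂ) ^ k * (k.factorial : ℂ) * ((m - 2 * k).factorial : ℂ)) else 0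

lemma cco_zero (m : ℕ) : cco m 0 = 1 := by
  have : (m.factorial : ℂ) ≠ 0 := by exact_mod_cast m.factorial_ne_zero
  simp [cco, this]

lemma cco_succ (m k : ℕ) :
    cco (m + 1) (k + 1) = cco m (k + 1) + ((m - 2 * k : ℕ) : ℂ) * cco m k := by
  have hk : (k.factorial : ℂ) ≠ 0 := by exact_mod_cast k.factorial_ne_zero
  have hk1 : (k : ℂ) + 1 ≠ 0 := by exact_mod_cast k.succ_ne_zero
  rcases lt_or_ge m (2 * k) with h | h
  · rw [cco, cco, cco, if_neg (by omega), if_neg (by omega), if_neg (by omega)]; simp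
  · obtain ⟨d, rfl⟩ := Nat.exists_eq_add_of_le h
    rcases d with _ | _ | d
    · rw [cco, cco, if_neg (by omega), if_neg (by omega)]; simp
    · rw [cco, cco, cco, if_pos (by omega), if_neg (by omega), if_pos (by omega)]
      have e1 : 2 * k + (0 + 1) + 1 - 2 * (k + 1) = 0 := by omega
      have e2 : 2 * k + (0 + 1) - 2 * k = 1 := by omega
      rw [e1, e2, Nat.factorial_succ (2 * k + (0 + 1)), Nat.factorial_succ k]
      push_cast
      simp only [Nat.factorial]
      field_simp
      push_cast
      ring
    · have hd : (d.factorial : ℂ) ≠ 0 := by exact_mod_cast d.factorial_ne_zero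
      have hd1 : (d : ℂ) + 1 ≠ 0 := by exact_mod_cast d.succ_ne_zero
      have hd2 : (d : ℂ) + 1 + 1 ≠ 0 := by exact_mod_cast (d + 1).succ_ne_zero
      rw [cco, cco, cco, if_pos (by omega), if_pos (by omega), if_pos (by omega)]
      have e1 : 2 * k + (d + 1 + 1) + 1 - 2 * (k + 1) = d + 1 := by omega
      have e2 : 2 * k + (d + 1 + 1) - 2 * k = d + 2 := by omega
      have e3 : 2 * k + (d + 1 + 1) - 2 * (k + 1) = d := by omega
      rw [e1, e2, e3, Nat.factorial_succ (2 * k + (d + 1 + 1)), Nat.factorial_succ k,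
        Nat.factorial_succ (d + 1), Nat.factorial_succ d]
      push_cast
      field_simp
      ring

lemma pow_expand (A B C : R) (h : B * A = A * B + C) (hA : Commute C A) (hB : Commute C B)
    (m : ℕ) : (A + B) ^ m = ∑ k ∈ Finset.range (m + 1), cco m k • (C ^ k * nob A B (m - 2 * k)) := by
  induction m with
  | zero => simp [cco_zero, nob]
  | succ m ih =>
    have step : ∀ p, (A + B) * nob A B p = nob A B (p + 1) + (p : ℂ) • (C * nob A B (p - 1)) := by
      intro p
      rw [add_mul, B_mul_nob A B C h hA, nob_succ, add_assoc, Nat.cast_smul_eq_nsmul]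
    have hC : ∀ k, (A + B) * C ^ k = C ^ k * (A + B) :=
      fun k => ((hA.add_right hB).pow_left k).eq.symm
    have h1 : (A + B) ^ (m + 1) = ∑ k ∈ Finset.range (m + 1),
          cco m k • (C ^ k * nob A B (m + 1 - 2 * k))
        + ∑ k ∈ Finset.range (m + 1), (((m - 2 * k : ℕ) : ℂ) * cco m k) •
          (C ^ (k + 1) * nob A B (m + 1 - 2 * (k + 1))) := by
      rw [pow_succ', ih, Finset.mul_sum, ← Finset.sum_add_distrib]
      refine Finset.sum_congr rfl fun k hk => ?_
      by_cases hkm : 2 * k ≤ m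
      · rw [mul_smul_comm, ← mul_assoc, hC, mul_assoc, step, mul_add, smul_add]
        congr 1
        · rw [Nat.sub_add_comm hkm]
        · rw [mul_smul_comm, smul_smul, mul_comm (cco m k), ← mul_assoc, ← pow_succ]
          rw [show m - 2 * k - 1 = m + 1 - 2 * (k + 1) by omega]
      · simp [cco, hkm]
    have h2 : ∑ k ∈ Finset.range (m + 1), cco m k • (C ^ k * nob A B (m + 1 - 2 * k))
       = ∑ k ∈ Finset.range (m + 1), cco m (k + 1) • (C ^ (k + 1) * nob A B (m + 1 - 2 * (k + 1)))
         + nob A B (m + 1) := by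
      have := Finset.sum_range_succ (fun k => cco m k • (C ^ k * nob A B (m + 1 - 2 * k))) (m + 1)
      rw [Finset.sum_range_succ'] at this
      have hz : cco m (m + 1) = 0 := by rw [cco, if_neg (by omega)]
      simp only [hz, zero_smul, add_zero, cco_zero, pow_zero, one_mul, one_smul, mul_zero,
        Nat.sub_zero] at this
      exact this.symm
    rw [h1, h2, Finset.sum_range_succ' _ (m + 1), cco_zero, add_right_comm, ← Finset.sum_add_distrib]
    congr 1
    · refine Finset.sum_congr rfl fun k hk => ?_
      rw [cco_succ, add_smul]
    · simp

lemma pow_expand' (A B C : R) (h : B * A = A * B + C) (hA : Commute C A) (hB : Commute C B)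
    (m : ℕ) : (A + B) ^ m = ∑ k ∈ Finset.range (m / 2 + 1),
      ((m.factorial : ℂ) / ((2 : ℂ) ^ k * (k.factorial : ℂ) * ((m - 2 * k).factorial : ℂ))) •
        (C ^ k * nob A B (m - 2 * k)) := by
  rw [pow_expand A B C h hA hB]
  symm
  have hs : Finset.range (m / 2 + 1) ⊆ Finset.range (m + 1) := by
    intro k; simp only [Finset.mem_range]; omega
  rw [← Finset.sum_subset hs]
  · refine Finset.sum_congr rfl fun k hk => ?_
    simp only [Finset.mem_range] at hk
    rw [cco, if_pos (by omega)]
  · intro k _ hk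
    simp only [Finset.mem_range] at hk
    rw [cco, if_neg (by omega), zero_smul]

end abstract_part

lemma e_swap (n : ℕ) (a b : Fin n ⊕ Fin n) : e n a * e n b = - (e n b * e n a) :=
  eq_neg_of_add_eq_zero_left (ExteriorAlgebra.ι_add_mul_swap _ _)

lemma ee_comm1 (n : ℕ) (a b c : Fin n ⊕ Fin n) :
    (e n a * e n b) * e n c = e n c * (e n a * e n b) := by
  rw [mul_assoc, e_swap n b c, mul_neg, ← mul_assoc, e_swap n a c, neg_mul, neg_neg, mul_assoc]

lemma ee_comm (n : ℕ) (a b c d : Fin n ⊕ Fin n) :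
    Commute (e n a * e n b) (e n c * e n d) :=
  Commute.mul_right (ee_comm1 n a b c) (ee_comm1 n a b d)

lemma tau_comm_minus (n : ℕ) : Commute (tau n) (ThetaMinus n) := by
  unfold tau ThetaMinus
  refine Commute.sum_left _ _ _ fun i _ => Commute.sum_right _ _ _ fun j _ =>
    Commute.sum_right _ _ _ fun k _ => ?_
  rw [commute_iff_eq, Algebra.TensorProduct.tmul_mul_tmul, Algebra.TensorProduct.tmul_mul_tmul,
    (ee_comm n _ _ _ _).eq, one_mul, mul_one]

lemma tau_comm_plus (n : ℕ) : Commute (tau n) (ThetaPlus n) := by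
  unfold tau ThetaPlus
  refine Commute.sum_left _ _ _ fun i _ => Commute.sum_right _ _ _ fun j _ =>
    Commute.sum_right _ _ _ fun k _ => ?_
  rw [commute_iff_eq, Algebra.TensorProduct.tmul_mul_tmul, Algebra.TensorProduct.tmul_mul_tmul,
    (ee_comm n _ _ _ _).eq, one_mul, mul_one]

lemma pderiv_comm (n : ℕ) (a b : Idx n) :
    ((pderiv a : Derivation ℂ (P n) (P n)) : P n →ₗ[ℂ] P n) * LinearMap.mulLeft ℂ (X b : P n)
      = LinearMap.mulLeft ℂ (X b : P n) * ((pderiv a : Derivation ℂ (P n) (P n)) : P n →ₗ[ℂ] P n)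
        + (if a = b then (1 : ℂ) else 0) • (1 : Module.End ℂ (P n)) := by
  refine LinearMap.ext fun p => ?_
  by_cases h : a = b
  · subst h
    simp [Derivation.leibniz]
  · simp [Derivation.leibniz, pderiv_X_of_ne (Ne.symm h), h]

lemma neg_left_aux {S : Type*} [Ring S] {x y c : S} (h : x * y = y * x + c) :
    (-x) * y = y * (-x) + -c := by
  rw [neg_mul, h, mul_neg, neg_add]

lemma neg_right_aux {S : Type*} [Ring S] {x y c : S} (h : x * y = y * x + c) :
    x * (-y) = (-y) * x + -c := by
  rw [neg_mul, mul_neg, h, neg_add]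

lemma Dop_lt (n : ℕ) {i j : Fin n} (h : i < j) : Dop n i j =
    ((pderiv ⟨(i, j), h⟩ : Derivation ℂ (P n) (P n)) : P n →ₗ[ℂ] P n) := by
  simp [Dop, h]

lemma Dop_swap (n : ℕ) (i j : Fin n) : Dop n i j = - Dop n j i := by
  unfold Dop
  rcases lt_trichotomy i j with h | h | h
  · simp [h, lt_asymm h]
  · subst h; simp
  · simp [h, lt_asymm h]

lemma Mop_lt (n : ℕ) {i j : Fin n} (h : i < j) : Mop n i j =
    LinearMap.mulLeft ℂ (X ⟨(i, j), h⟩ : P n) := by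
  simp [Mop, h]

lemma Mop_swap (n : ℕ) (i j : Fin n) : Mop n i j = - Mop n j i := by
  unfold Mop
  rcases lt_trichotomy i j with h | h | h
  · simp [h, lt_asymm h]
  · subst h; simp
  · simp [h, lt_asymm h]

/-- the structure constants -/
def dco (n : ℕ) (i j k l : Fin n) : ℂ :=
  (if i = k then (if j = l then 1 else 0) else 0) - (if j = k then (if i = l then 1 else 0) else 0)

lemma DM_comm_lt (n : ℕ) {i j k l : Fin n} (h : i < j) (h' : k < l) :
    Dop n i j * Mop n k l = Mop n k l * Dop n i j + dco n i j k l • (1 : Module.End ℂ (P n)) := by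
  rw [Dop_lt n h, Mop_lt n h', pderiv_comm]
  have h1 : ¬ (j = k ∧ i = l) := by rintro ⟨rfl, rfl⟩; exact absurd h (lt_asymm h')
  simp only [dco, ← ite_and, h1, if_false, sub_zero, Subtype.mk.injEq, Prod.mk.injEq]

lemma DM_comm_lt2 (n : ℕ) {i j : Fin n} (h : i < j) (k l : Fin n) :
    Dop n i j * Mop n k l = Mop n k l * Dop n i j + dco n i j k l • (1 : Module.End ℂ (P n)) := by
  rcases lt_trichotomy k l with h' | h' | h'
  · exact DM_comm_lt n h h'
  · subst h'
    have h0 : Mop n k k = 0 := by simp [Mop]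
    have h1 : dco n i j k k = 0 := by
      simp only [dco, ← ite_and, and_comm (a := j = k), sub_self]
    rw [h0, h1, mul_zero, zero_mul, zero_smul, add_zero]
  · have h1 : dco n i j k l • (1 : Module.End ℂ (P n)) = -(dco n i j l k • 1) := by
      refine Eq.trans ?_ (neg_smul _ _)
      congr 1
      simp only [dco, ← ite_and, and_comm (a := j = k), and_comm (a := j = l), neg_sub]
    rw [Mop_swap, h1]
    exact neg_right_aux (DM_comm_lt n h h')

lemma DM_comm (n : ℕ) (i j k l : Fin n) :
    Dop n i j * Mop n k l = Mop n k l * Dop n i j + dco n i j k l • (1 : Module.End ℂ (P n)) := by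
  rcases lt_trichotomy i j with h | h | h
  · exact DM_comm_lt2 n h k l
  · subst h
    have h0 : Dop n i i = 0 := by simp [Dop]
    have h1 : dco n i i k l = 0 := by simp [dco]
    rw [h0, h1, mul_zero, zero_mul, zero_smul, add_zero]
  · have h1 : dco n i j k l • (1 : Module.End ℂ (P n)) = -(dco n j i k l • 1) := by
      refine Eq.trans ?_ (neg_smul _ _)
      congr 1
      simp only [dco, neg_sub]
    rw [Dop_swap, h1]
    exact neg_left_aux (DM_comm_lt2 n h k l)

lemma dco_sum {W : Type*} [AddCommGroup W] [Module ℂ W] (n : ℕ) (i j : Fin n)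
    (t : Fin n → Fin n → W) : ∑ k, ∑ l, dco n i j k l • t k l = t i j - t j i := by
  simp [dco, sub_smul, ite_smul, Finset.sum_sub_distrib]

lemma quad (n : ℕ) (i j : Fin n) :
    (e n (.inr j) * e n (.inr i)) * (e n (.inl i) * e n (.inl j))
      = (e n (.inl i) * e n (.inr i)) * (e n (.inl j) * e n (.inr j)) := by
  rw [mul_assoc, ← mul_assoc (e n (.inr i)), ee_comm1, ← mul_assoc, e_swap n (.inr j),
    e_swap n (.inr i), neg_mul_neg, (ee_comm n _ _ _ _).eq]

lemma theta_comm (n : ℕ) : ThetaPlus n * ThetaMinus n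
    = ThetaMinus n * ThetaPlus n + 2 * tau n ^ 2 := by
  have hP : ThetaPlus n * ThetaMinus n = ∑ i, ∑ j, ∑ k, ∑ l,
      ((e n (.inr j) * e n (.inr i)) * (e n (.inl k) * e n (.inl l))) ⊗ₜ[ℂ]
        (Dop n i j * Mop n k l) := by
    unfold ThetaPlus ThetaMinus
    simp only [Finset.sum_mul]
    simp only [Finset.mul_sum, Algebra.TensorProduct.tmul_mul_tmul]
  have hM : ThetaMinus n * ThetaPlus n = ∑ i, ∑ j, ∑ k, ∑ l,
      ((e n (.inr j) * e n (.inr i)) * (e n (.inl k) * e n (.inl l))) ⊗ₜ[ℂ]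
        (Mop n k l * Dop n i j) := by
    unfold ThetaPlus ThetaMinus
    rw [Finset.mul_sum]
    refine Finset.sum_congr rfl fun i _ => ?_
    rw [Finset.mul_sum]
    refine Finset.sum_congr rfl fun j _ => ?_
    rw [Finset.sum_mul]
    refine Finset.sum_congr rfl fun k _ => ?_
    rw [Finset.sum_mul]
    refine Finset.sum_congr rfl fun l _ => ?_
    rw [Algebra.TensorProduct.tmul_mul_tmul, (ee_comm n _ _ _ _).eq]
  have hT : 2 * tau n ^ 2 = ∑ i, ∑ j, (2 : ℂ) • 
      (((e n (.inr j) * e n (.inr i)) * (e n (.inl i) * e n (.inl j))) ⊗ₜ[ℂ]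
        (1 : Module.End ℂ (P n))) := by
    simp only [← Finset.smul_sum, quad]
    rw [pow_two, tau, Finset.sum_mul_sum, ofNat_smul_eq_nsmul, nsmul_eq_mul]
    simp only [Algebra.TensorProduct.tmul_mul_tmul, mul_one]
    norm_num
  rw [hP, hM, hT]
  simp only [← Finset.sum_add_distrib]
  refine Finset.sum_congr rfl fun i _ => Finset.sum_congr rfl fun j _ => ?_
  simp only [DM_comm, TensorProduct.tmul_add, Finset.sum_add_distrib]
  congr 1
  have hx : e n (.inl j) * e n (.inl i) = - (e n (.inl i) * e n (.inl j)) := e_swap _ _ _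
  simp only [TensorProduct.tmul_smul]
  refine (dco_sum n i j (fun k l => ((e n (.inr j) * e n (.inr i)) *
    (e n (.inl k) * e n (.inl l))) ⊗ₜ[ℂ] (1 : Module.End ℂ (P n)))).trans ?_
  simp only [hx, mul_neg, TensorProduct.neg_tmul, two_smul]
  exact sub_neg_eq_add _ _

/-- `(Θ₋ + Θ₊)^m = Σ_{k=0}^{⌊m/2⌋} c_k(m) (2τ²)^k Σ_{s=0}^{m−2k} C(m−2k,s) Θ₋^s Θ₊^{m−2k−s}`,
where `c_k(m) = m!/(2^k k! (m−2k)!)`. -/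
theorem sum_pow_expansion (n : ℕ) (hn : 1 ≤ n) (m : ℕ) :
    (ThetaMinus n + ThetaPlus n) ^ m =
      ∑ k ∈ Finset.range (m / 2 + 1),
        ((m.factorial : ℂ) /
            ((2 : ℂ) ^ k * (k.factorial : ℂ) * ((m - 2 * k).factorial : ℂ))) •
          ((2 * tau n ^ 2) ^ k *
            ∑ s ∈ Finset.range (m - 2 * k + 1),
              ((m - 2 * k).choose s) •
                (ThetaMinus n ^ s * ThetaPlus n ^ (m - 2 * k - s))) := by
  exact pow_expand' (ThetaMinus n) (ThetaPlus n) (2 * tau n ^ 2) (theta_comm n)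
    (((Commute.ofNat_left 2 _).mul_left ((tau_comm_minus n).pow_left 2)))
    (((Commute.ofNat_left 2 _).mul_left ((tau_comm_plus n).pow_left 2))) m

end
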